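/- Let Ω ⊆ ℝⁿ be a bounded open set that is star-shaped with respect to x* ∈ Ω and let g : Ω → ℝ be continuous. Let u : Ω → ℝ be an upper semicontinuous viscosity subsolution of min{ u(x) − g(x), (x − x*) · ∇u(x) } = 0 on Ω with u(x*) ≤ g(x*), and let v : Ω → ℝ be a lower semicontinuous viscosity supersolution of the same equation. Then u ≤ v on Ω. -/

import Mathlib

open Set

/-- A set `S` is star-shaped with respect to a point `c`. -/
def StarShapedSet {n : ℕ} (S : Set (EuclideanSpace ℝ (Fin n)))
    (c : EuclideanSpace ℝ (Fin n)) : Prop :=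
  ∀ x ∈ S, ∀ t ∈ Icc (0 : ℝ) 1, t • c + (1 - t) • x ∈ S

/-!
The maximum of `g` over the segment `[xs, x]` lies between `u x` and `v x`. Let `K` be a segment and
`φ = a * ‖· - xs‖ ^ 2 + N * infDist · K ^ 2` with `a` small and `N` large. Squared distances to
convex sets are `C¹`, so `φ` is a test function, and the large `N` keeps the extrema of `u - φ` and
`v + φ` near `K`, hence in the interior of the domain.

* For `K = [xs, x]`, `φ` strictly increases along the rays from `xs`, so a maximum of `u - φ` is
  at `xs` or at a point where `u ≤ g`. This gives `u x ≤ max g` over `[xs, x]`.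
* For `K = [z, x]` with `z ∈ [xs, x]`, `φ` strictly increases along the rays from `xs` except at
  the points whose projection to `K` is `z`. So a minimum of `v + φ` is close to `z`, and
  there `v ≥ g`. This gives `g z ≤ v x`.
-/

open Metric Topology
open scoped RealInnerProductSpace

section MetricProjection

variable {E : Type*} [NormedAddCommGroup E] [InnerProductSpace ℝ E] {K : Set E} {y w p q z c : E}

/-- `p` is the metric projection of `y` to `K`, encoded by the variational inequality; for convex
`K` this says that `p` is the point of `K` nearest to `y`. -/
structure IsMetricProjection (K : Set E) (y p : E) : Prop where
  mem : p ∈ K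
  inner_nonpos : ∀ q ∈ K, ⟪y - p, q - p⟫ ≤ 0

theorem exists_isMetricProjection (hne : K.Nonempty) (hcomplete : IsComplete K)
    (hconvex : Convex ℝ K) (y : E) : ∃ p, IsMetricProjection K y p := by
  obtain ⟨p, hpK, hp⟩ := exists_norm_eq_iInf_of_complete_convex hne hcomplete hconvex y
  exact ⟨p, hpK, (norm_eq_iInf_iff_real_inner_le_zero hconvex hpK).1 hp⟩

namespace IsMetricProjection

theorem sq_norm_add_two_mul_inner_le (hp : IsMetricProjection K y p) (hq : q ∈ K) (w : E) :
    ‖y - p‖ ^ 2 + 2 * ⟪y - p, w - y⟫ ≤ ‖w - q‖ ^ 2 := by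
  have hnonneg : 0 ≤ ⟪y - p, p - q⟫ := by
    rw [← neg_sub q p, inner_neg_right]
    exact neg_nonneg.2 (hp.inner_nonpos q hq)
  calc ‖y - p‖ ^ 2 + 2 * ⟪y - p, w - y⟫
      ≤ ‖y - p‖ ^ 2 + 2 * ⟪y - p, (w - y) + (p - q)⟫ + ‖(w - y) + (p - q)‖ ^ 2 := by
        rw [inner_add_right]
        nlinarith [sq_nonneg ‖(w - y) + (p - q)‖]
    _ = ‖w - q‖ ^ 2 := by
        rw [← norm_add_sq_real]
        congr 2
        abel

theorem norm_sub_eq_infDist (hp : IsMetricProjection K y p) : ‖y - p‖ = infDist y K := by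
  refine le_antisymm ((le_infDist ⟨p, hp.mem⟩).2 fun q hq => ?_) ?_
  · rw [dist_eq_norm]
    refine le_of_sq_le_sq ?_ (norm_nonneg _)
    simpa using hp.sq_norm_add_two_mul_inner_le hq y
  · rw [← dist_eq_norm]
    exact infDist_le_dist_of_mem hp.mem

theorem norm_sub_le (hp : IsMetricProjection K y p) (hq : IsMetricProjection K w q) :
    ‖p - q‖ ≤ ‖y - w‖ := by
  have hsq : ‖p - q‖ * ‖p - q‖ ≤ ‖y - w‖ * ‖p - q‖ := calc
    ‖p - q‖ * ‖p - q‖ = ⟪y - w, p - q⟫ + ⟪y - p, q - p⟫ + ⟪w - q, p - q⟫ := by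
      rw [← real_inner_self_eq_norm_mul_norm, ← neg_sub p q, inner_neg_right]
      simp only [← sub_eq_add_neg, ← inner_sub_left, ← inner_add_left]
      congr 1
      abel
    _ ≤ ⟪y - w, p - q⟫ := by linarith [hp.inner_nonpos q hq.mem, hq.inner_nonpos p hp.mem]
    _ ≤ ‖y - w‖ * ‖p - q‖ := real_inner_le_norm _ _
  rcases (norm_nonneg (p - q)).eq_or_lt with hzero | hpos
  · exact hzero ▸ norm_nonneg _
  · exact le_of_mul_le_mul_right hsq hpos

theorem hasFDerivAt_sq_infDist (hp : IsMetricProjection K y p) :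
    HasFDerivAt (fun w => infDist w K ^ 2) ((2 : ℝ) • innerSL ℝ (y - p)) y := by
  have hlower (w : E) : infDist y K ^ 2 + 2 * ⟪y - p, w - y⟫ ≤ infDist w K ^ 2 := by
    refine (Real.sqrt_le_iff.1 ((le_infDist ⟨p, hp.mem⟩).2 fun q hq => ?_)).2
    rw [dist_eq_norm, ← hp.norm_sub_eq_infDist]
    exact Real.sqrt_le_iff.2 ⟨norm_nonneg _, hp.sq_norm_add_two_mul_inner_le hq w⟩
  have hupper (w : E) :
      infDist w K ^ 2 ≤ infDist y K ^ 2 + 2 * ⟪y - p, w - y⟫ + ‖w - y‖ ^ 2 := by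
    rw [← hp.norm_sub_eq_infDist, ← norm_add_sq_real, sub_add_sub_cancel', ← dist_eq_norm]
    exact pow_le_pow_left₀ infDist_nonneg (infDist_le_dist_of_mem hp.mem) 2
  have hremainder : (fun w => infDist w K ^ 2 - infDist y K ^ 2 - 2 * ⟪y - p, w - y⟫)
      =O[𝓝 y] fun w => ‖w - y‖ ^ 2 := by
    refine .of_bound 1 (.of_forall fun w => ?_)
    rw [one_mul, Real.norm_of_nonneg (by linarith [hlower w]), Real.norm_of_nonneg (by positivity)]
    linarith [hupper w]
  rw [hasFDerivAt_iff_isLittleO]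
  refine (hremainder.trans_isLittleO ?_).congr_left fun w => by simp [-map_sub]
  exact Asymptotics.isLittleO_pow_sub_sub y one_lt_two

theorem eq_of_mem_segment (hp : IsMetricProjection K c p) (hzK : z ∈ K)
    (hz : z ∈ segment ℝ c p) : z = p := by
  obtain ⟨s, t, hs, -, hst, rfl⟩ := hz
  obtain rfl : t = 1 - s := by linarith
  have hsub : s • c + (1 - s) • p - p = s • (c - p) := by module
  have hnonpos := hp.inner_nonpos _ hzK
  rw [hsub, inner_smul_right, real_inner_self_eq_norm_sq] at hnonpos
  rcases mul_eq_zero.1 (hnonpos.antisymm (by positivity)) with rfl | hcp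
  · simp
  · rw [← sub_eq_zero, hsub, norm_eq_zero.1 (pow_eq_zero_iff two_ne_zero |>.1 hcp), smul_zero]

theorem inner_nonneg_of_mem_segment (hp : IsMetricProjection K y p) (hzK : z ∈ K)
    (hz : z ∈ segment ℝ c p) (hne : z ≠ p) : 0 ≤ ⟪y - p, p - c⟫ := by
  obtain ⟨s, t, hs, -, hst, rfl⟩ := hz
  obtain rfl : t = 1 - s := by linarith
  have hspos : 0 < s := hs.lt_of_ne (by rintro rfl; simp at hne)
  have hnonpos := hp.inner_nonpos _ hzK
  rw [show s • c + (1 - s) • p - p = -(s • (p - c)) by module, inner_neg_right,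
    inner_smul_right, neg_nonpos] at hnonpos
  exact nonneg_of_mul_nonneg_right hnonpos hspos

end IsMetricProjection

theorem contDiff_sq_infDist (hne : K.Nonempty) (hcomplete : IsComplete K) (hconvex : Convex ℝ K) :
    ContDiff ℝ 1 fun y => infDist y K ^ 2 := by
  choose P hP using exists_isMetricProjection hne hcomplete hconvex
  have hPcont : Continuous P := LipschitzWith.continuous <| LipschitzWith.of_dist_le_mul (K := 1)
    fun y w => by simpa [dist_eq_norm] using (hP y).norm_sub_le (hP w)
  have hfderiv : fderiv ℝ (fun y => infDist y K ^ 2) = fun y => (2 : ℝ) • innerSL ℝ (y - P y) :=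
    funext fun y => (hP y).hasFDerivAt_sq_infDist.fderiv
  refine contDiff_one_iff_fderiv.2
    ⟨fun y => (hP y).hasFDerivAt_sq_infDist.differentiableAt, ?_⟩
  rw [hfderiv]
  fun_prop

end MetricProjection

theorem isCompact_segment {E : Type*} [AddCommGroup E] [Module ℝ E] [TopologicalSpace E]
    [IsTopologicalAddGroup E] [ContinuousSMul ℝ E] (x y : E) : IsCompact (segment ℝ x y) :=
  convexHull_pair (𝕜 := ℝ) x y ▸ (toFinite {x, y}).isCompact_convexHull ℝ

theorem exists_isLocalMin_add_sq_infDist {X : Type*} [PseudoMetricSpace X] [ProperSpace X]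
    {K U : Set X} {f : X → ℝ} {x : X} (hK : IsCompact K) (hU : IsOpen U) (hKU : K ⊆ U)
    (hf : LowerSemicontinuousOn f U) (hx : x ∈ K) :
    ∃ N : ℝ, 0 ≤ N ∧ ∃ y ∈ U, IsLocalMin (fun w => f w + N * infDist w K ^ 2) y ∧
      f y + N * infDist y K ^ 2 ≤ f x := by
  obtain ⟨r, hr, hrU⟩ := hK.exists_cthickening_subset_open hU hKU
  have hcompact : IsCompact (cthickening r K) := hK.cthickening
  have hxr : x ∈ cthickening r K := self_subset_cthickening K hx
  obtain ⟨m, hm⟩ := (hf.mono hrU).bddBelow_of_isCompact hcompact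
  replace hm : ∀ w ∈ cthickening r K, m ≤ f w := fun w hw => hm (mem_image_of_mem f hw)
  obtain ⟨N, hN, hNr⟩ : ∃ N : ℝ, 0 < N ∧ f x - m < N * r ^ 2 := by
    refine ⟨(f x - m + 1) / r ^ 2, div_pos (by linarith [hm x hxr]) (by positivity), ?_⟩
    rw [div_mul_cancel₀ _ (by positivity)]
    exact lt_add_one _
  have hlsc : LowerSemicontinuousOn (fun w => f w + N * infDist w K ^ 2) (cthickening r K) :=
    (hf.mono hrU).add (Continuous.lowerSemicontinuous (by fun_prop) |>.lowerSemicontinuousOn _)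
  obtain ⟨y, hy, hmin⟩ := hlsc.exists_isMinOn ⟨x, hxr⟩ hcompact
  have hle : f y + N * infDist y K ^ 2 ≤ f x := by
    simpa [infDist_zero_of_mem hx] using hmin hxr
  have hyr : infDist y K < r := by
    refine lt_of_pow_lt_pow_left₀ 2 hr.le (lt_of_mul_lt_mul_left ?_ hN.le)
    linarith [hm y hy]
  have hnhds : cthickening r K ∈ 𝓝 y := Filter.mem_of_superset
    (isOpen_thickening.mem_nhds ((mem_thickening_iff_infDist_lt ⟨x, hx⟩).2 hyr))
    (thickening_subset_cthickening r K)
  exact ⟨N, hN.le, y, hrU hy, hmin.isLocalMin hnhds, hle⟩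

section ConvexPenalty

variable {E : Type*} [NormedAddCommGroup E]

/-- The test function of the proof: the weight `N` penalizes leaving the convex set `K`, and the
weight `a` makes the function strictly increasing along the rays from `c`. -/
noncomputable def convexPenalty (c : E) (K : Set E) (a N : ℝ) (y : E) : ℝ :=
  a * ‖y - c‖ ^ 2 + N * infDist y K ^ 2

variable {c y p : E} {K : Set E} {a N : ℝ}

theorem exists_isLocalMin_add_convexPenalty [ProperSpace E] {U : Set E} {f : E → ℝ} {x : E}
    (hK : IsCompact K) (hU : IsOpen U) (hKU : K ⊆ U) (hf : LowerSemicontinuousOn f U)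
    (hx : x ∈ K) (c : E) (ha : 0 ≤ a) :
    ∃ N : ℝ, 0 ≤ N ∧ ∃ y ∈ U, IsLocalMin (fun w => f w + convexPenalty c K a N w) y ∧
      f y ≤ f x + a * ‖x - c‖ ^ 2 := by
  have hlsc : LowerSemicontinuousOn (fun w => f w + a * ‖w - c‖ ^ 2) U :=
    hf.add (Continuous.lowerSemicontinuous (by fun_prop) |>.lowerSemicontinuousOn _)
  obtain ⟨N, hN, y, hyU, hmin, hle⟩ := exists_isLocalMin_add_sq_infDist hK hU hKU hlsc hx
  simp only [add_assoc] at hmin hle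
  have hpenalty : 0 ≤ convexPenalty c K a N y := by
    unfold convexPenalty
    positivity
  exact ⟨N, hN, y, hyU, hmin, (le_add_of_nonneg_right hpenalty).trans hle⟩

variable [InnerProductSpace ℝ E]

theorem contDiff_convexPenalty (hne : K.Nonempty) (hcomplete : IsComplete K)
    (hconvex : Convex ℝ K) : ContDiff ℝ 1 (convexPenalty c K a N) :=
  (contDiff_const.mul ((contDiff_id.sub contDiff_const).norm_sq ℝ)).add
    (contDiff_const.mul (contDiff_sq_infDist hne hcomplete hconvex))

theorem fderiv_convexPenalty_apply_sub (hp : IsMetricProjection K y p) :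
    fderiv ℝ (convexPenalty c K a N) y (y - c) =
      2 * (a * ‖y - c‖ ^ 2 + N * (‖y - p‖ ^ 2 + ⟪y - p, p - c⟫)) := by
  have hderiv : HasFDerivAt (convexPenalty c K a N) _ y :=
    ((((hasFDerivAt_id y).sub_const c).norm_sq).const_mul a).add
      (hp.hasFDerivAt_sq_infDist.const_mul N)
  have hsplit : ⟪y - p, y - c⟫ = ‖y - p‖ ^ 2 + ⟪y - p, p - c⟫ := by
    rw [← real_inner_self_eq_norm_sq, ← inner_add_right, sub_add_sub_cancel]
  rw [hderiv.fderiv, ← hsplit, ← real_inner_self_eq_norm_sq (y - c)]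
  simp only [id_eq, ContinuousLinearMap.comp_id, add_apply, smul_apply, coe_innerSL_apply,
    nsmul_eq_mul, Nat.cast_ofNat, smul_eq_mul]
  ring

theorem fderiv_convexPenalty_apply_sub_pos (ha : 0 < a) (hN : 0 ≤ N)
    (hp : IsMetricProjection K y p) (hinner : 0 ≤ ⟪y - p, p - c⟫) (hyc : y ≠ c) :
    0 < fderiv ℝ (convexPenalty c K a N) y (y - c) := by
  have hnorm : 0 < ‖y - c‖ := norm_sub_pos_iff.2 hyc
  rw [fderiv_convexPenalty_apply_sub hp]
  positivity

theorem fderiv_convexPenalty_apply_sub_pos_of_mem (ha : 0 < a) (hN : 0 ≤ N)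
    (hp : IsMetricProjection K y p) (hc : c ∈ K) (hyc : y ≠ c) :
    0 < fderiv ℝ (convexPenalty c K a N) y (y - c) := by
  refine fderiv_convexPenalty_apply_sub_pos ha hN hp ?_ hyc
  rw [← neg_sub c p, inner_neg_right]
  exact neg_nonneg.2 (hp.inner_nonpos c hc)

theorem fderiv_convexPenalty_segment_apply_sub_pos {x z : E} (ha : 0 < a) (hN : 0 ≤ N)
    (hz : z ∈ segment ℝ c x) (hp : IsMetricProjection (segment ℝ z x) y p) (hzp : z ≠ p) :
    0 < fderiv ℝ (convexPenalty c (segment ℝ z x) a N) y (y - c) := by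
  have hzK : z ∈ segment ℝ z x := left_mem_segment ℝ z x
  have hzcp : z ∈ segment ℝ c p := mem_segment_iff_wbtw.2 <|
    (mem_segment_iff_wbtw.1 hz).trans_right_left (mem_segment_iff_wbtw.1 hp.mem)
  have hyc : y ≠ c := by
    rintro rfl
    exact hzp (hp.eq_of_mem_segment hzK hzcp)
  exact fderiv_convexPenalty_apply_sub_pos ha hN hp
    (hp.inner_nonneg_of_mem_segment hzK hzcp hzp) hyc

end ConvexPenalty

section Viscosity

variable {E : Type*} [NormedAddCommGroup E] [InnerProductSpace ℝ E]

/-- `u` is an upper semicontinuous viscosity subsolution of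
`min {u(x) - g(x), (x - c) · ∇u(x)} = 0` on `Ω`. Test functions are `C¹` on the whole space. -/
structure IsViscositySubsolution (Ω : Set E) (c : E) (g u : E → ℝ) : Prop where
  upperSemicontinuousOn : UpperSemicontinuousOn u Ω
  min_nonpos : ∀ φ : E → ℝ, ContDiff ℝ 1 φ → ∀ x ∈ Ω, IsLocalMaxOn (fun y => u y - φ y) Ω x →
    min (u x - g x) (fderiv ℝ φ x (x - c)) ≤ 0

/-- `v` is a lower semicontinuous viscosity supersolution of
`min {v(x) - g(x), (x - c) · ∇v(x)} = 0` on `Ω`. Test functions are `C¹` on the whole space. -/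
structure IsViscositySupersolution (Ω : Set E) (c : E) (g v : E → ℝ) : Prop where
  lowerSemicontinuousOn : LowerSemicontinuousOn v Ω
  min_nonneg : ∀ φ : E → ℝ, ContDiff ℝ 1 φ → ∀ x ∈ Ω, IsLocalMinOn (fun y => v y - φ y) Ω x →
    0 ≤ min (v x - g x) (fderiv ℝ φ x (x - c))

variable [FiniteDimensional ℝ E] {Ω K : Set E} {c x z : E} {g u v : E → ℝ} {M : ℝ}

theorem IsViscositySubsolution.le_of_forall_obstacle_le (hu : IsViscositySubsolution Ω c g u)
    (hΩ : IsOpen Ω) (hg : ContinuousOn g Ω) (hc : u c ≤ g c) (hK : IsCompact K)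
    (hconvex : Convex ℝ K) (hKΩ : K ⊆ Ω) (hcK : c ∈ K) (hM : ∀ y ∈ K, g y ≤ M) (hx : x ∈ K) :
    u x ≤ M := by
  by_contra! hlt
  obtain ⟨a, ha, hax⟩ := exists_pos_mul_lt (sub_pos.2 hlt) (‖x - c‖ ^ 2)
  have hU : IsOpen (Ω ∩ g ⁻¹' Iio (u x - a * ‖x - c‖ ^ 2)) := hg.isOpen_inter_preimage hΩ isOpen_Iio
  have hKU : K ⊆ Ω ∩ g ⁻¹' Iio (u x - a * ‖x - c‖ ^ 2) := fun y hy =>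
    ⟨hKΩ hy, (hM y hy).trans_lt (by linarith)⟩
  have hlsc : LowerSemicontinuousOn (fun y => -u y) Ω :=
    continuous_neg.comp_upperSemicontinuousOn_antitone hu.upperSemicontinuousOn
      fun _ _ => neg_le_neg
  obtain ⟨N, hN, y, ⟨hyΩ, hgy⟩, hmin, hle⟩ := exists_isLocalMin_add_convexPenalty
    hK hU hKU (hlsc.mono inter_subset_left) hx c ha.le
  have hgu : g y < u y := lt_of_lt_of_le hgy (by linarith)
  have hmax : IsLocalMaxOn (fun w => u w - convexPenalty c K a N w) Ω y := by
    simpa [neg_add_eq_sub] using hmin.neg.on Ω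
  have hmin_nonpos := hu.min_nonpos _
    (contDiff_convexPenalty ⟨x, hx⟩ hK.isComplete hconvex) y hyΩ hmax
  obtain ⟨p, hp⟩ := exists_isMetricProjection ⟨x, hx⟩ hK.isComplete hconvex y
  have hyc : y ≠ c := by
    rintro rfl
    exact hgu.not_ge hc
  exact hmin_nonpos.not_gt
    (lt_min (sub_pos.2 hgu) (fderiv_convexPenalty_apply_sub_pos_of_mem ha hN hp hcK hyc))

theorem IsViscositySupersolution.obstacle_le_of_mem_segment (hv : IsViscositySupersolution Ω c g v)
    (hΩ : IsOpen Ω) (hg : ContinuousOn g Ω) (hseg : segment ℝ z x ⊆ Ω) (hz : z ∈ segment ℝ c x) :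
    g z ≤ v x := by
  by_contra! hlt
  obtain ⟨a, ha, hax⟩ := exists_pos_mul_lt (sub_pos.2 hlt) (‖x - c‖ ^ 2)
  have hzK : z ∈ segment ℝ z x := left_mem_segment ℝ z x
  have hxK : x ∈ segment ℝ z x := right_mem_segment ℝ z x
  have hK : IsCompact (segment ℝ z x) := isCompact_segment z x
  have hconvex : Convex ℝ (segment ℝ z x) := convex_segment z x
  obtain ⟨r, hr, hball⟩ : ∃ r > 0, ball z r ⊆ Ω ∩ g ⁻¹' Ioi (v x + a * ‖x - c‖ ^ 2) :=
    isOpen_iff.1 (hg.isOpen_inter_preimage hΩ isOpen_Ioi) z ⟨hseg hzK, show _ < g z by linarith⟩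
  obtain ⟨N, hN, y, ⟨hyΩ, hyr⟩, hmin, hle⟩ := exists_isLocalMin_add_convexPenalty hK
    (hΩ.inter isOpen_thickening) (subset_inter hseg (self_subset_thickening hr _))
    (hv.lowerSemicontinuousOn.mono inter_subset_left) hxK c ha.le
  have hminOn : IsLocalMinOn (fun w => v w - -convexPenalty c (segment ℝ z x) a N w) Ω y := by
    simpa using hmin.on Ω
  obtain ⟨hgv, hderiv⟩ := le_min_iff.1 <| hv.min_nonneg _
    (contDiff_convexPenalty ⟨x, hxK⟩ hK.isComplete hconvex).neg y hyΩ hminOn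
  obtain ⟨p, hp⟩ := exists_isMetricProjection ⟨x, hxK⟩ hK.isComplete hconvex y
  have hzp : z ≠ p := by
    rintro rfl
    have hyz : y ∈ ball z r := by
      rw [mem_ball, dist_eq_norm, hp.norm_sub_eq_infDist]
      exact (mem_thickening_iff_infDist_lt ⟨x, hxK⟩).1 hyr
    exact (sub_nonneg.1 hgv |>.trans hle).not_gt (hball hyz).2
  have hpos := fderiv_convexPenalty_segment_apply_sub_pos ha hN hz hp hzp
  rw [fderiv_fun_neg] at hderiv
  exact hpos.not_ge (neg_nonneg.1 hderiv)

theorem comparison_principle_general (hΩ : IsOpen Ω) (hstar : StarConvex ℝ c Ω)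
    (hg : ContinuousOn g Ω) (hu : IsViscositySubsolution Ω c g u) (hc : u c ≤ g c)
    (hv : IsViscositySupersolution Ω c g v) (hx : x ∈ Ω) : u x ≤ v x := by
  have hseg : segment ℝ c x ⊆ Ω := hstar.segment_subset hx
  have hcseg : c ∈ segment ℝ c x := left_mem_segment ℝ c x
  have hxseg : x ∈ segment ℝ c x := right_mem_segment ℝ c x
  have hcompact : IsCompact (segment ℝ c x) := isCompact_segment c x
  have hconvex : Convex ℝ (segment ℝ c x) := convex_segment c x
  obtain ⟨z, hz, hmax⟩ := hcompact.exists_isMaxOn ⟨x, hxseg⟩ (hg.mono hseg)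
  calc u x ≤ g z :=
      hu.le_of_forall_obstacle_le hΩ hg hc hcompact hconvex hseg hcseg hmax hxseg
    _ ≤ v x :=
      hv.obstacle_le_of_mem_segment hΩ hg ((hconvex.segment_subset hz hxseg).trans hseg) hz

end Viscosity

theorem StarShapedSet.starConvex {n : ℕ} {S : Set (EuclideanSpace ℝ (Fin n))}
    {c : EuclideanSpace ℝ (Fin n)} (hS : StarShapedSet S c) : StarConvex ℝ c S := by
  intro x hx s t hs ht hst
  obtain rfl : t = 1 - s := by linarith
  exact hS x hx s ⟨hs, by linarith⟩

theorem comparison_principle {n : ℕ}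
    (Ω : Set (EuclideanSpace ℝ (Fin n))) (hΩo : IsOpen Ω)
    (hΩb : Bornology.IsBounded Ω)
    (xs : EuclideanSpace ℝ (Fin n)) (hxs : xs ∈ Ω) (hΩ : StarShapedSet Ω xs)
    (g : EuclideanSpace ℝ (Fin n) → ℝ) (hg : ContinuousOn g Ω)
    (u : EuclideanSpace ℝ (Fin n) → ℝ) (husc : UpperSemicontinuousOn u Ω)
    (hsub : ∀ φ : EuclideanSpace ℝ (Fin n) → ℝ, ContDiff ℝ 1 φ →
      ∀ x ∈ Ω, IsLocalMaxOn (fun y => u y - φ y) Ω x →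
        min (u x - g x) (fderiv ℝ φ x (x - xs)) ≤ 0)
    (huxs : u xs ≤ g xs)
    (v : EuclideanSpace ℝ (Fin n) → ℝ) (hlsc : LowerSemicontinuousOn v Ω)
    (hsup : ∀ φ : EuclideanSpace ℝ (Fin n) → ℝ, ContDiff ℝ 1 φ →
      ∀ x ∈ Ω, IsLocalMinOn (fun y => v y - φ y) Ω x →
        0 ≤ min (v x - g x) (fderiv ℝ φ x (x - xs))) :
    ∀ x ∈ Ω, u x ≤ v x := fun _ hx =>
  comparison_principle_general hΩo hΩ.starConvex hg ⟨husc, hsub⟩ huxs ⟨hlsc, hsup⟩ hx
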